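/- Fix an integer d ≥ 1. For θ = (θ_0, θ_1, θ_2, θ_3, θ_4) ∈ (ℂ^d)^5 and r = (r_0, …, r_4) ∈ ℂ^5, set c^i(t) = r_i·∏_{j=1}^d (t − θ_i^j) (i = 0,…,4) and h(t) = c^1(t)c^2(t) + c^3(t)c^4(t). Define G : (ℂ^d)^5 × ℂ^5 → ℂ^{3d} × ℂ^4 × ℂ^{2d+1} by G(θ, r) = (θ_0, θ_1, θ_2, r_0, r_1, r_2, r_3, coefficient vector of h). Suppose the point (θ̃, y) satisfies: y_i ≠ 0 for all i; the 5d numbers θ̃_i^j are pairwise distinct; y_1y_2 + y_3y_4 ≠ 0 (so h has degree 2d); h has 2d pairwise distinct roots β_1, …, β_{2d}, all nonzero, none of which is a root of c^3 or of c^4; and c^3, c^4 are not proportional over ℂ. Then the Fréchet derivative over ℂ of G at (θ̃, y) is a ℂ-linear isomorphism of ℂ^{5d+5}. -/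

import Mathlib

open Polynomial

/-- all coefficients depend differentiably on the parameter -/
def CoeffDiff {E : Type*} [NormedAddCommGroup E] [NormedSpace ℂ E] (P : E → ℂ[X]) : Prop :=
  ∀ k, Differentiable ℂ (fun p => (P p).coeff k)

theorem CoeffDiff.add {E : Type*} [NormedAddCommGroup E] [NormedSpace ℂ E] {P Q : E → ℂ[X]}
    (hP : CoeffDiff P) (hQ : CoeffDiff Q) : CoeffDiff (fun p => P p + Q p) := by
  intro k
  simp only [coeff_add]
  exact (hP k).add (hQ k)

theorem CoeffDiff.sub {E : Type*} [NormedAddCommGroup E] [NormedSpace ℂ E] {P Q : E → ℂ[X]}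
    (hP : CoeffDiff P) (hQ : CoeffDiff Q) : CoeffDiff (fun p => P p - Q p) := by
  intro k
  simp only [coeff_sub]
  exact (hP k).sub (hQ k)

theorem CoeffDiff.mul {E : Type*} [NormedAddCommGroup E] [NormedSpace ℂ E] {P Q : E → ℂ[X]}
    (hP : CoeffDiff P) (hQ : CoeffDiff Q) : CoeffDiff (fun p => P p * Q p) := by
  intro k
  simp only [coeff_mul]
  exact Differentiable.fun_sum fun i _ => (hP i.1).mul (hQ i.2)

theorem CoeffDiff.const {E : Type*} [NormedAddCommGroup E] [NormedSpace ℂ E] (P : ℂ[X]) :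
    CoeffDiff (fun _ : E => P) := fun k => differentiable_const _

theorem CoeffDiff.C {E : Type*} [NormedAddCommGroup E] [NormedSpace ℂ E] {f : E → ℂ}
    (hf : Differentiable ℂ f) : CoeffDiff (fun p => Polynomial.C (f p)) := by
  intro k
  simp only [coeff_C]
  split_ifs
  · exact hf
  · exact differentiable_const _

theorem CoeffDiff.prod {E ι : Type*} [NormedAddCommGroup E] [NormedSpace ℂ E] (s : Finset ι)
    {P : ι → E → ℂ[X]} (hP : ∀ i, CoeffDiff (P i)) : CoeffDiff (fun p => ∏ i ∈ s, P i p) := by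
  classical
  induction s using Finset.induction_on with
  | empty => simpa using CoeffDiff.const _
  | insert a s ha ih =>
    simp only [Finset.prod_insert ha]
    exact (hP a).mul ih

theorem factor_hasDerivAt {d : ℕ} (x a : Fin d → ℂ) (r ρ t : ℂ) :
    HasDerivAt (fun s : ℂ => (r + s * ρ) * ∏ j, (t - (x j + s * a j)))
      (ρ * ∏ j, (t - x j) + r * ∑ j, (∏ k ∈ Finset.univ.erase j, (t - x k)) * (-a j)) 0 := by
  have h1 : HasDerivAt (fun s : ℂ => r + s * ρ) ρ 0 := by
    simpa using ((hasDerivAt_id (0:ℂ)).mul_const ρ).const_add r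
  have h2 : ∀ j ∈ (Finset.univ : Finset (Fin d)),
      HasDerivAt (fun s : ℂ => t - (x j + s * a j)) (-a j) 0 := by
    intro j _
    simpa using (((hasDerivAt_id (0:ℂ)).mul_const (a j)).const_add (x j)).const_sub t
  have h3 := h1.fun_mul (HasDerivAt.fun_finsetProd h2)
  simpa using h3

theorem factor_natDegree {d : ℕ} (x : Fin d → ℂ) (r : ℂ) :
    (Polynomial.C r * ∏ j, (X - Polynomial.C (x j))).natDegree ≤ d := by
  refine (natDegree_C_mul_le _ _).trans ?_
  refine (natDegree_prod_le _ _).trans ?_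
  simp

theorem sum_at_root {d : ℕ} (x a : Fin d → ℂ) (i : Fin d) :
    ∑ j, (∏ k ∈ Finset.univ.erase j, (x i - x k)) * (-a j)
      = (∏ k ∈ Finset.univ.erase i, (x i - x k)) * (-a i) := by
  refine Finset.sum_eq_single i ?_ (by simp)
  intro j _ hj
  rw [Finset.prod_eq_zero (i := i) (by simp [hj.symm]) (by simp), zero_mul]

/-- the algebraic core: the kernel is trivial -/
theorem kernel_core {d : ℕ} (x a z b : Fin d → ℂ) (r q ρ : ℂ) (hr : r ≠ 0) (hq : q ≠ 0)
    (hx : Function.Injective x) (hz : Function.Injective z) (hxz : ∀ i j, x i ≠ z j)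
    (H : ∀ t : ℂ, (r * ∑ j, (∏ k ∈ Finset.univ.erase j, (t - x k)) * (-a j)) *
        (q * ∏ j, (t - z j)) + (r * ∏ j, (t - x j)) *
        (ρ * ∏ j, (t - z j) + q * ∑ j, (∏ k ∈ Finset.univ.erase j, (t - z k)) * (-b j)) = 0) :
    a = 0 ∧ b = 0 ∧ ρ = 0 := by
  have key : ∀ (x : Fin d → ℂ), Function.Injective x → ∀ i,
      ∏ k ∈ Finset.univ.erase i, (x i - x k) ≠ 0 := by
    intro x hx i
    rw [Finset.prod_ne_zero_iff]
    intro k hk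
    rw [sub_ne_zero]
    intro e
    exact (Finset.ne_of_mem_erase hk) (hx e).symm
  have root : ∀ (x : Fin d → ℂ) i, ∏ k, (x i - x k) = 0 := fun x i =>
    Finset.prod_eq_zero (Finset.mem_univ i) (sub_self _)
  have ha : a = 0 := by
    funext i
    have h1 := H (x i)
    rw [sum_at_root, root x i] at h1
    have h2 : ∏ j, (x i - z j) ≠ 0 :=
      Finset.prod_ne_zero_iff.2 fun j _ => sub_ne_zero.2 (hxz i j)
    simpa [hr, hq, h2, key x hx i] using h1
  have hb : b = 0 := by
    funext i
    have h1 := H (z i)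
    rw [sum_at_root z, root z i] at h1
    have h2 : ∏ j, (z i - x j) ≠ 0 :=
      Finset.prod_ne_zero_iff.2 fun j _ => sub_ne_zero.2 (hxz j i).symm
    simpa [hr, hq, h2, key z hz i] using h1
  refine ⟨ha, hb, ?_⟩
  subst ha hb
  obtain ⟨t, ht⟩ := ((Set.finite_range x).union (Set.finite_range z)).exists_notMem
  have h1 : ∏ j, (t - x j) ≠ 0 :=
    Finset.prod_ne_zero_iff.2 fun j _ => sub_ne_zero.2 fun e => ht (Or.inl ⟨j, e.symm⟩)
  have h2 : ∏ j, (t - z j) ≠ 0 :=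
    Finset.prod_ne_zero_iff.2 fun j _ => sub_ne_zero.2 fun e => ht (Or.inr ⟨j, e.symm⟩)
  have h3 := H t
  simpa [hr, h1, h2] using h3

/-- Proposition 3.1(a) of the paper, via coefficients.
With `c^i(t) = r_i ∏_j (t − θ_i^j)` and `h = c^1 c^2 + c^3 c^4`, the map
`G(θ, r) = (θ₀, θ₁, θ₂, r₀, r₁, r₂, r₃, coefficient vector of h)` has bijective
Fréchet derivative over `ℂ` at a point `(θ̃, y)` satisfying the listed genericity
conditions. -/
theorem stmt1 (d : ℕ) (hd : 1 ≤ d)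
    (θ : Fin 5 → Fin d → ℂ) (y : Fin 5 → ℂ)
    (c : Fin 5 → Polynomial ℂ)
    (hc : ∀ i, c i = Polynomial.C (y i) * ∏ j, (Polynomial.X - Polynomial.C (θ i j)))
    (h : Polynomial ℂ)
    (hh : h = c 1 * c 2 + c 3 * c 4)
    (hy : ∀ i, y i ≠ 0)
    (hθ : Function.Injective (fun p : Fin 5 × Fin d => θ p.1 p.2))
    (hlead : y 1 * y 2 + y 3 * y 4 ≠ 0)
    (β : Fin (2 * d) → ℂ)
    (hβinj : Function.Injective β)
    (hβroot : ∀ i, h.eval (β i) = 0)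
    (hβ0 : ∀ i, β i ≠ 0)
    (hβ3 : ∀ i, (c 3).eval (β i) ≠ 0)
    (hβ4 : ∀ i, (c 4).eval (β i) ≠ 0)
    (hli : LinearIndependent ℂ ![c 3, c 4]) :
    Function.Bijective
      (fderiv ℂ
        (fun p : (Fin 5 → Fin d → ℂ) × (Fin 5 → ℂ) =>
          ((fun i : Fin 3 => p.1 (Fin.castLE (by norm_num) i),
            fun i : Fin 4 => p.2 (Fin.castLE (by norm_num) i),
            fun k : Fin (2 * d + 1) =>
              ((Polynomial.C (p.2 1) * ∏ j, (Polynomial.X - Polynomial.C (p.1 1 j))) *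
                  (Polynomial.C (p.2 2) * ∏ j, (Polynomial.X - Polynomial.C (p.1 2 j))) +
                (Polynomial.C (p.2 3) * ∏ j, (Polynomial.X - Polynomial.C (p.1 3 j))) *
                  (Polynomial.C (p.2 4) * ∏ j, (Polynomial.X - Polynomial.C (p.1 4 j)))).coeff k) :
            (Fin 3 → Fin d → ℂ) × (Fin 4 → ℂ) × (Fin (2 * d + 1) → ℂ)))
        (θ, y)) := by
  set G := (fun p : (Fin 5 → Fin d → ℂ) × (Fin 5 → ℂ) =>
          ((fun i : Fin 3 => p.1 (Fin.castLE (by norm_num) i),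
            fun i : Fin 4 => p.2 (Fin.castLE (by norm_num) i),
            fun k : Fin (2 * d + 1) =>
              ((Polynomial.C (p.2 1) * ∏ j, (Polynomial.X - Polynomial.C (p.1 1 j))) *
                  (Polynomial.C (p.2 2) * ∏ j, (Polynomial.X - Polynomial.C (p.1 2 j))) +
                (Polynomial.C (p.2 3) * ∏ j, (Polynomial.X - Polynomial.C (p.1 3 j))) *
                  (Polynomial.C (p.2 4) * ∏ j, (Polynomial.X - Polynomial.C (p.1 4 j)))).coeff k) :
            (Fin 3 → Fin d → ℂ) × (Fin 4 → ℂ) × (Fin (2 * d + 1) → ℂ))) with hG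
  have hfac : ∀ i : Fin 5, CoeffDiff (fun p : (Fin 5 → Fin d → ℂ) × (Fin 5 → ℂ) =>
      Polynomial.C (p.2 i) * ∏ j, (Polynomial.X - Polynomial.C (p.1 i j))) := by
    intro i
    refine CoeffDiff.mul (CoeffDiff.C (by fun_prop)) (CoeffDiff.prod _ fun j => ?_)
    exact CoeffDiff.sub (CoeffDiff.const _) (CoeffDiff.C (by fun_prop))
  have hdiff : Differentiable ℂ G := by
    refine Differentiable.prodMk (by fun_prop) (Differentiable.prodMk (by fun_prop) ?_)
    rw [differentiable_pi]
    intro k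
    exact (((hfac 1).mul (hfac 2)).add ((hfac 3).mul (hfac 4))) k
  set D := fderiv ℂ G (θ, y) with hD
  have hinj : Function.Injective D := by
    rw [injective_iff_map_eq_zero]
    rintro ⟨a, ρ⟩ hw
    have hline : HasDerivAt (fun s : ℂ => ((θ, y) + s • (a, ρ) :
        (Fin 5 → Fin d → ℂ) × (Fin 5 → ℂ))) (a, ρ) 0 := by
      simpa using ((hasDerivAt_id (0:ℂ)).smul_const (a, ρ)).const_add (θ, y)
    have hcomp : HasDerivAt (fun s : ℂ => G ((θ, y) + s • (a, ρ))) 0 0 := by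
      have h0 : HasFDerivAt G D ((θ, y) + (0:ℂ) • (a, ρ)) := by
        simpa using (hdiff (θ, y)).hasFDerivAt
      have := h0.comp_hasDerivAt (0:ℂ) hline
      rwa [hw] at this
    have hA : ∀ i : Fin 3, a (Fin.castLE (by norm_num) i) = 0 := by
      intro i
      have h1 := hasDerivAt_pi.1 hcomp.fst i
      have h2 := hasDerivAt_pi.1 hline.fst (Fin.castLE (by norm_num) i)
      exact h2.unique h1
    have hR : ∀ i : Fin 4, ρ (Fin.castLE (by norm_num) i) = 0 := by
      intro i
      have h1 := hasDerivAt_pi.1 hcomp.snd.fst i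
      have h2 := hasDerivAt_pi.1 hline.snd (Fin.castLE (by norm_num) i)
      exact h2.unique h1
    have a0 : a 0 = 0 := hA 0
    have a1 : a 1 = 0 := hA 1
    have a2 : a 2 = 0 := hA 2
    have r0 : ρ 0 = 0 := hR 0
    have r1 : ρ 1 = 0 := hR 1
    have r2 : ρ 2 = 0 := hR 2
    have r3 : ρ 3 = 0 := hR 3
    have hE := hcomp.snd.snd
    have hker : ∀ t : ℂ, (y 3 * ∑ j, (∏ k ∈ Finset.univ.erase j, (t - θ 3 k)) * (-a 3 j)) *
        (y 4 * ∏ j, (t - θ 4 j)) + (y 3 * ∏ j, (t - θ 3 j)) *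
        (ρ 4 * ∏ j, (t - θ 4 j) +
          y 4 * ∑ j, (∏ k ∈ Finset.univ.erase j, (t - θ 4 k)) * (-a 4 j)) = 0 := by
      intro t
      have e1 : HasDerivAt (fun s : ℂ =>
          ∑ k : Fin (2 * d + 1), (G ((θ, y) + s • (a, ρ))).2.2 k * t ^ (k : ℕ)) 0 0 := by
        have := HasDerivAt.fun_sum (u := (Finset.univ : Finset (Fin (2 * d + 1))))
          fun k _ => (hasDerivAt_pi.1 hE k).mul_const (t ^ (k : ℕ))
        simpa using this
      have f := fun i : Fin 5 => factor_hasDerivAt (θ i) (a i) (y i) (ρ i) t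
      have e2 := ((f 1).mul (f 2)).add ((f 3).mul (f 4))
      have e3 : (fun s : ℂ =>
          ∑ k : Fin (2 * d + 1), (G ((θ, y) + s • (a, ρ))).2.2 k * t ^ (k : ℕ)) =
          fun s : ℂ => ((y 1 + s * ρ 1) * ∏ j, (t - (θ 1 j + s * a 1 j))) *
            ((y 2 + s * ρ 2) * ∏ j, (t - (θ 2 j + s * a 2 j))) +
            ((y 3 + s * ρ 3) * ∏ j, (t - (θ 3 j + s * a 3 j))) *
            ((y 4 + s * ρ 4) * ∏ j, (t - (θ 4 j + s * a 4 j))) := by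
        funext s
        simp only [hG]
        rw [Fin.sum_univ_eq_sum_range (fun k => Polynomial.coeff _ k * t ^ k),
          ← eval_eq_sum_range']
        · simp [eval_prod]
        · refine Nat.lt_succ_of_le ((natDegree_add_le _ _).trans (max_le ?_ ?_)) <;>
          · refine natDegree_mul_le.trans ?_
            rw [two_mul]
            exact add_le_add (factor_natDegree _ _) (factor_natDegree _ _)
      rw [e3] at e1
      have e4 := e2.unique e1
      simpa [a1, a2, r1, r2, r3] using e4
    obtain ⟨a3, a4, r4⟩ := kernel_core (θ 3) (a 3) (θ 4) (a 4) (y 3) (y 4) (ρ 4) (hy 3) (hy 4)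
      (fun i j e => by
        have := @hθ (3, i) (3, j) e
        simpa using this)
      (fun i j e => by
        have := @hθ (4, i) (4, j) e
        simpa using this)
      (fun i j e => by
        have := @hθ (3, i) (4, j) e
        simp at this) hker
    refine Prod.ext ?_ ?_
    · funext i
      fin_cases i
      exacts [a0, a1, a2, a3, a4]
    · funext i
      fin_cases i
      exacts [r0, r1, r2, r3, r4]
  refine ⟨hinj, ?_⟩
  have hdim : Module.finrank ℂ ((Fin 5 → Fin d → ℂ) × (Fin 5 → ℂ)) =
      Module.finrank ℂ ((Fin 3 → Fin d → ℂ) × (Fin 4 → ℂ) × (Fin (2 * d + 1) → ℂ)) := by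
    simp [Module.finrank_prod, Module.finrank_pi_fintype]
    ring
  exact (LinearMap.injective_iff_surjective_of_finrank_eq_finrank
    (f := (D : _ →ₗ[ℂ] _)) hdim).1 hinj
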